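/- arXiv:2310.11013 — 5 statements merged into one kernel-verified Lean document; each statement's English description precedes it below -/
import Mathlib

section
/- Let M be a positive integer, let p : (Fin M → ℕ) → ℝ be nonnegative with ∑_{𝐤} p_𝐤 < ∞, and let a, b ≥ 0 be real numbers with a + b ≤ 1. Then ∑_{𝐥 ∈ ℕ^M} ∑_{𝐧 ∈ ℕ^M} p_{𝐧+𝐥} · a^{|𝐥|} · b^{|𝐧|} · ∏_{m=1}^{M} C(n_m + l_m, l_m) = ∑_{𝐤 ∈ ℕ^M} p_𝐤 · (a+b)^{|𝐤|}, where |𝐧| := n_1 + ⋯ + n_M and C(·,·) denotes the binomial coefficient. -/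
open scoped BigOperators

/-- The map `(l, n) ↦ (n + l, l)` onto pairs `(k, l)` with `l ≤ k`. -/
def lossEquiv (M : ℕ) : ((Fin M → ℕ) × (Fin M → ℕ)) ≃
    (Σ k : Fin M → ℕ, {l : Fin M → ℕ // l ∈ Fintype.piFinset (fun m => Finset.range (k m + 1))}) where
  toFun x := ⟨x.2 + x.1, x.1, by
    simp only [Fintype.mem_piFinset, Finset.mem_range, Pi.add_apply]
    intro m
    omega⟩
  invFun y := (y.2.1, y.1 - y.2.1)
  left_inv x := by simp
  right_inv := by
    rintro ⟨k, l, hl⟩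
    have h : k - l + l = k := by
      funext m
      have := Finset.mem_range.1 (Fintype.mem_piFinset.1 hl m)
      simp only [Pi.add_apply, Pi.sub_apply]
      omega
    refine Sigma.ext h ?_
    refine (Subtype.heq_iff_coe_eq ?_).2 rfl
    intro x
    simp only [h]

lemma fiber_sum (M : ℕ) (k : Fin M → ℕ) (a b : ℝ) :
    ∑ l ∈ Fintype.piFinset (fun m => Finset.range (k m + 1)),
      a ^ (∑ m, l m) * b ^ (∑ m, (k m - l m)) * ∏ m, ((k m).choose (l m) : ℝ)
      = (a + b) ^ (∑ m, k m) := by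
  simp_rw [← Finset.prod_pow_eq_pow_sum, ← Finset.prod_mul_distrib]
  rw [← Finset.prod_univ_sum (fun m => Finset.range (k m + 1))
    (fun m j => a ^ j * b ^ (k m - j) * ((k m).choose j : ℝ))]
  simp_rw [← add_pow]

/-- Summation-reindexing identity (Theorem 1 of the paper): the double sum over
loss patterns `l` and residual photon numbers `n` collapses, via `k = n + l` and
the binomial theorem applied coordinatewise, to a single sum. -/
theorem stmt0 (M : ℕ) (hM : 0 < M) (p : (Fin M → ℕ) → ℝ)
    (hp : ∀ k, 0 ≤ p k) (hsum : Summable p)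
    (a b : ℝ) (ha : 0 ≤ a) (hb : 0 ≤ b) (hab : a + b ≤ 1) :
    ∑' l : Fin M → ℕ, ∑' n : Fin M → ℕ,
      p (n + l) * a ^ (∑ m, l m) * b ^ (∑ m, n m) *
        ∏ m, ((n m + l m).choose (l m) : ℝ)
      = ∑' k : Fin M → ℕ, p k * (a + b) ^ (∑ m, k m) := by
  let g : (Σ k : Fin M → ℕ,
      {l : Fin M → ℕ // l ∈ Fintype.piFinset (fun m => Finset.range (k m + 1))}) → ℝ :=
    fun y => p y.1 * (a ^ (∑ m, y.2.1 m) * b ^ (∑ m, (y.1 m - y.2.1 m)) *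
      ∏ m, ((y.1 m).choose (y.2.1 m) : ℝ))
  have hg0 : ∀ y, 0 ≤ g y := fun y => by
    have := hp y.1
    positivity
  have hfib : ∀ k, ∑' l, g ⟨k, l⟩ = p k * (a + b) ^ (∑ m, k m) := by
    intro k
    rw [← fiber_sum, Finset.mul_sum]
    exact Finset.tsum_subtype (Fintype.piFinset (fun m => Finset.range (k m + 1)))
      (fun l => p k * (a ^ (∑ m, l m) * b ^ (∑ m, (k m - l m)) *
        ∏ m, ((k m).choose (l m) : ℝ)))
  have hgs : Summable g := by
    rw [summable_sigma_of_nonneg hg0]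
    refine ⟨fun k => (hasSum_fintype _).summable, ?_⟩
    simp_rw [hfib]
    refine Summable.of_nonneg_of_le (fun k => mul_nonneg (hp k) (by positivity)) (fun k => ?_) hsum
    exact mul_le_of_le_one_right (hp k) (pow_le_one₀ (by positivity) hab)
  have hF : ∀ l n : Fin M → ℕ, p (n + l) * a ^ (∑ m, l m) * b ^ (∑ m, n m) *
        ∏ m, ((n m + l m).choose (l m) : ℝ) = g (lossEquiv M (l, n)) := by
    intro l n
    simp [g, lossEquiv, mul_assoc]
  simp_rw [hF]
  have hs : Summable (fun x => g (lossEquiv M x)) := (lossEquiv M).summable_iff.2 hgs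
  rw [← hs.tsum_prod, (lossEquiv M).tsum_eq g, hgs.tsum_sigma]
  simp_rw [hfib]
end

section
/- Let M be a positive integer and N_B ≥ 0. Let p : (Fin M → ℕ) → ℝ be the product thermal pmf p_𝐧 = ∏_{m=1}^{M} N_B^{n_m}/(N_B+1)^{n_m+1}, and let q : (Fin M → ℕ) → ℝ be any nonnegative function. Setting q_n := ∑_{𝐧 : n_1+⋯+n_M = n} q_𝐧, one has ∑_{𝐧 ∈ ℕ^M} √(p_𝐧 · q_𝐧) ≤ ∑_{n=0}^{∞} √(q_n) · √(C(n+M-1, n) · N_B^n/(N_B+1)^{n+M}). -/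
open scoped BigOperators ENNReal

theorem card_aux (M n : ℕ) :
    (Finset.Nat.antidiagonalTuple M n).card = (n + M - 1).choose n := by
  have h := Finset.card_finsuppAntidiag_nat_eq_choose (s := (Finset.univ : Finset (Fin M))) n
  rw [Finset.card_univ, Fintype.card_fin, add_comm M n] at h
  rw [← h]
  refine Finset.card_equiv Finsupp.equivFunOnFinite.symm ?_
  intro v
  simp [Finset.Nat.mem_antidiagonalTuple]

/-- The Bhattacharyya coefficient between the `M`-mode thermal photon-number
distribution and an arbitrary photon-number distribution is bounded by an
expression depending only on the total photon-number distribution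
(Eq. (11) of the paper); sums are taken in `ℝ≥0∞` as they may be infinite. -/
theorem stmt3 (M : ℕ) (hM : 0 < M) (N_B : ℝ) (hNB : 0 ≤ N_B)
    (q : (Fin M → ℕ) → ℝ) (hq : ∀ v, 0 ≤ q v) :
    ∑' v : Fin M → ℕ,
        ENNReal.ofReal
          (Real.sqrt ((∏ m, N_B ^ (v m) / (N_B + 1) ^ (v m + 1)) * q v))
      ≤ ∑' n : ℕ,
          ENNReal.ofReal
            (Real.sqrt (∑ v ∈ Finset.Nat.antidiagonalTuple M n, q v) *
              Real.sqrt (((n + M - 1).choose n : ℝ) *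
                (N_B ^ n / (N_B + 1) ^ (n + M)))) := by
  rw [← (Finset.Nat.sigmaAntidiagonalTupleEquivTuple M).tsum_eq, ENNReal.tsum_sigma']
  refine ENNReal.tsum_le_tsum fun n => ?_
  have hprod : ∀ v ∈ Finset.Nat.antidiagonalTuple M n,
      (∏ m, N_B ^ (v m) / (N_B + 1) ^ (v m + 1)) = N_B ^ n / (N_B + 1) ^ (n + M) := by
    intro v hv
    rw [Finset.Nat.mem_antidiagonalTuple] at hv
    rw [Finset.prod_div_distrib, Finset.prod_pow_eq_pow_sum, Finset.prod_pow_eq_pow_sum,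
      Finset.sum_add_distrib, hv]
    simp
  have hc : 0 ≤ N_B ^ n / (N_B + 1) ^ (n + M) := by positivity
  change ∑' v : Finset.Nat.antidiagonalTuple M n, ENNReal.ofReal
    (Real.sqrt ((∏ m, N_B ^ (v.1 m) / (N_B + 1) ^ (v.1 m + 1)) * q v.1)) ≤ _
  rw [Finset.tsum_subtype (Finset.Nat.antidiagonalTuple M n) (fun v => ENNReal.ofReal
    (Real.sqrt ((∏ m, N_B ^ (v m) / (N_B + 1) ^ (v m + 1)) * q v))),
    ← ENNReal.ofReal_sum_of_nonneg (fun _ _ => Real.sqrt_nonneg _)]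
  apply ENNReal.ofReal_le_ofReal
  have hcs := Real.sum_sqrt_mul_sqrt_le (Finset.Nat.antidiagonalTuple M n) hq
    (fun _ => hc)
  rw [Finset.sum_const, nsmul_eq_mul, card_aux] at hcs
  refine le_trans (le_of_eq (Finset.sum_congr rfl fun v hv => ?_)) hcs
  rw [hprod v hv, Real.sqrt_mul hc, mul_comm]
end

section
/- Let M be a positive integer, N_B > 0, ε ∈ [0, 1/2], and let x satisfy N_B/(N_B+1) < x ≤ 1. Let (q_n)_{n∈ℕ} be a probability mass function on ℕ such that ∑_{n=0}^{∞} √(q_n) · √(C(n+M-1, n) · N_B^n/(N_B+1)^{n+M}) ≥ 1 - 2ε. Then ∑_{n=0}^{∞} q_n x^n ≥ (1-2ε)^2 · (N_B + 1 - N_B/x)^M. -/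
open scoped BigOperators

/-- From the ε-covertness condition on the total photon-number pmf `q`, the
probability generating function of `q` at `x` is bounded below; proved by
Cauchy–Schwarz after splitting `x^(-n/2) x^(n/2)` and evaluating the tilted
negative binomial sum. -/
theorem stmt6 (M : ℕ) (hM : 0 < M) (N_B : ℝ) (hNB : 0 < N_B)
    (ε : ℝ) (hε0 : 0 ≤ ε) (hε1 : ε ≤ 1 / 2)
    (x : ℝ) (hx1 : N_B / (N_B + 1) < x) (hx2 : x ≤ 1)
    (q : ℕ → ℝ) (hq0 : ∀ n, 0 ≤ q n) (hq1 : HasSum q 1)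
    (hcov : 1 - 2 * ε ≤
        ∑' n : ℕ, Real.sqrt (q n) *
          Real.sqrt (((n + M - 1).choose n : ℝ) *
            (N_B ^ n / (N_B + 1) ^ (n + M)))) :
    (1 - 2 * ε) ^ 2 * (N_B + 1 - N_B / x) ^ M ≤ ∑' n : ℕ, q n * x ^ n := by
  obtain ⟨k, rfl⟩ : ∃ k, M = k + 1 := ⟨M - 1, by omega⟩
  have hN1 : 0 < N_B + 1 := by linarith
  have hx0 : 0 < x := lt_trans (by positivity) hx1
  have hr1 : N_B / ((N_B + 1) * x) < 1 := by
    rw [div_lt_iff₀ hN1] at hx1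
    rw [div_lt_one (by positivity)]
    linarith
  have hr0 : 0 ≤ N_B / ((N_B + 1) * x) := by positivity
  have hD : N_B + 1 - N_B / x = (N_B + 1) * (1 - N_B / ((N_B + 1) * x)) := by
    field_simp
  have hDpos : 0 < N_B + 1 - N_B / x := by
    rw [hD]
    exact mul_pos hN1 (by linarith)
  have hgeo := hasSum_choose_mul_geometric_of_norm_lt_one (𝕜 := ℝ) k
    (r := N_B / ((N_B + 1) * x)) (by rwa [Real.norm_of_nonneg hr0])
  set p : ℕ → ℝ := fun n => ((n + (k + 1) - 1).choose n : ℝ) *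
            (N_B ^ n / (N_B + 1) ^ (n + (k + 1))) with hp
  have hp0 : ∀ n, 0 ≤ p n := fun n => by positivity
  have hG : HasSum (fun n => p n * (x ^ n)⁻¹) (((N_B + 1 - N_B / x) ^ (k + 1))⁻¹) := by
    have h := hgeo.mul_left (((N_B + 1) ^ (k + 1))⁻¹)
    convert! h using 1
    · funext n
      have hc : (n + (k + 1) - 1).choose n = (n + k).choose k := by
        rw [show n + (k + 1) - 1 = n + k by omega, Nat.choose_symm_add]
      simp only [hp, hc, div_pow, mul_pow, pow_add]
      field_simp
    · rw [hD, mul_pow, mul_inv, one_div]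
  have hF : Summable (fun n => q n * x ^ n) :=
    Summable.of_nonneg_of_le (fun n => mul_nonneg (hq0 n) (by positivity))
      (fun n => mul_le_of_le_one_right (hq0 n) (pow_le_one₀ hx0.le hx2)) hq1.summable
  have e1 : ∀ n, Real.sqrt (q n * x ^ n) ^ (2 : ℝ) = q n * x ^ n := fun n => by
    rw [Real.rpow_two, Real.sq_sqrt (mul_nonneg (hq0 n) (by positivity))]
  have e2 : ∀ n, Real.sqrt (p n * (x ^ n)⁻¹) ^ (2 : ℝ) = p n * (x ^ n)⁻¹ := fun n => by
    rw [Real.rpow_two, Real.sq_sqrt (mul_nonneg (hp0 n) (by positivity))]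
  have hCS := Real.inner_le_Lp_mul_Lq_tsum_of_nonneg Real.HolderConjugate.two_two
    (f := fun n => Real.sqrt (q n * x ^ n)) (g := fun n => Real.sqrt (p n * (x ^ n)⁻¹))
    (fun n => Real.sqrt_nonneg _) (fun n => Real.sqrt_nonneg _)
    (by simpa only [e1] using hF) (by simpa only [e2] using hG.summable)
  simp only [e1, e2, hG.tsum_eq, ← Real.sqrt_eq_rpow] at hCS
  have e3 : ∀ n, Real.sqrt (q n * x ^ n) * Real.sqrt (p n * (x ^ n)⁻¹)
      = Real.sqrt (q n) * Real.sqrt (p n) := fun n => by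
    rw [← Real.sqrt_mul (mul_nonneg (hq0 n) (by positivity)), ← Real.sqrt_mul (hq0 n)]
    congr 1
    field_simp
  simp only [e3] at hCS
  have hS : 0 ≤ ∑' n, q n * x ^ n := tsum_nonneg fun n => mul_nonneg (hq0 n) (by positivity)
  have h1 := hcov.trans hCS
  have h2 := pow_le_pow_left₀ (by linarith) h1 2
  rw [mul_pow, Real.sq_sqrt hS, Real.sq_sqrt (by positivity)] at h2
  rwa [← div_eq_mul_inv, le_div_iff₀ (by positivity)] at h2
end

section
/- Let M be a positive integer, 0 < η < 1, N_B > 0, ε ∈ [0,1/2], and let x satisfy N_B/(N_B+1) < x ≤ 1. Let (q_n) and (p_n) be probability mass functions on ℕ whose generating functions P_W(ξ) = ∑ q_n ξ^n and P_S(ξ) = ∑ p_n ξ^n satisfy, at ξ = x, the relation P_W(x) = (ηN_B(1-x)+1)^{-M} · P_S(1 + (x-1)(1-η)/(ηN_B(1-x)+1)). If ∑_{n=0}^{∞} √(q_n) · √(C(n+M-1,n) N_B^n/(N_B+1)^{n+M}) ≥ 1-2ε, then P_S(1 + (x-1)(1-η)/(ηN_B(1-x)+1)) ≥ (1-2ε)^2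 · (N_B+1-N_B/x)^M · (ηN_B(1-x)+1)^M. -/
open scoped BigOperators

lemma cs_aux (f g : ℕ → ℝ) (hf : ∀ n, 0 ≤ f n) (hg : ∀ n, 0 ≤ g n)
    (hfs : Summable f) (hgs : Summable g) :
    ∑' n, Real.sqrt (f n) * Real.sqrt (g n) ≤ Real.sqrt (∑' n, f n) * Real.sqrt (∑' n, g n) := by
  have e : ∀ a : ℝ, 0 ≤ a → Real.sqrt a ^ (2 : ℝ) = a := fun a ha => by
    rw [Real.rpow_two, Real.sq_sqrt ha]
  have h := Real.inner_le_Lp_mul_Lq_tsum_of_nonneg (p := 2) (q := 2)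
    (f := fun n => Real.sqrt (f n)) (g := fun n => Real.sqrt (g n))
    Real.HolderConjugate.two_two
    (fun n => Real.sqrt_nonneg _) (fun n => Real.sqrt_nonneg _)
    (by simpa only [e _ (hf _)] using hfs) (by simpa only [e _ (hg _)] using hgs)
  simp only [e _ (hf _), e _ (hg _)] at h
  rwa [← Real.sqrt_eq_rpow, ← Real.sqrt_eq_rpow] at h

lemma thermal_aux (M : ℕ) (hM : 0 < M) (N x : ℝ) (hN : 0 < N) (hx : 0 < x)
    (hx1 : N / (N + 1) < x) :
    HasSum (fun n : ℕ => (((n + M - 1).choose n : ℝ) * (N ^ n / (N + 1) ^ (n + M))) / x ^ n)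
      ((N + 1 - N / x) ^ M)⁻¹ := by
  obtain ⟨k, rfl⟩ : ∃ k, M = k + 1 := ⟨M - 1, by omega⟩
  have hr0 : 0 ≤ N / (N + 1) / x := by positivity
  have hr1 : N / (N + 1) / x < 1 := (div_lt_one hx).2 hx1
  have h := (hasSum_choose_mul_geometric_of_norm_lt_one k (r := N / (N + 1) / x)
    (by rwa [Real.norm_of_nonneg hr0])).mul_left (((N + 1) ^ (k + 1))⁻¹)
  convert! h using 1
  · funext n
    have : (n + (k + 1) - 1).choose n = (n + k).choose k := by
      rw [show n + (k + 1) - 1 = n + k by omega, Nat.choose_symm_add]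
    rw [this, pow_add (N + 1) n (k + 1), div_pow, div_pow]
    field_simp
  · rw [one_div, ← mul_inv, ← mul_pow]
    congr 2
    field_simp

/-- Combining the transformation law (Eq. (86) of the paper) between the
probe's total photon-number generating function `P_S` and the generating
function `P_W` of the photon number intercepted by Willie with the
ε-covertness condition yields the key intermediate inequality (Eq. (87)). -/
theorem stmt7 (M : ℕ) (hM : 0 < M) (η N_B ε x : ℝ)
    (hη0 : 0 < η) (hη1 : η < 1) (hNB : 0 < N_B)
    (hε0 : 0 ≤ ε) (hε1 : ε ≤ 1 / 2)
    (hx1 : N_B / (N_B + 1) < x) (hx2 : x ≤ 1)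
    (q p : ℕ → ℝ) (hq0 : ∀ n, 0 ≤ q n) (hq1 : HasSum q 1)
    (hp0 : ∀ n, 0 ≤ p n) (hp1 : HasSum p 1)
    (hrel : ∑' n : ℕ, q n * x ^ n
        = ((η * N_B * (1 - x) + 1) ^ M)⁻¹ *
            ∑' n : ℕ, p n *
              (1 + (x - 1) * (1 - η) / (η * N_B * (1 - x) + 1)) ^ n)
    (hcov : 1 - 2 * ε ≤
        ∑' n : ℕ, Real.sqrt (q n) *
          Real.sqrt (((n + M - 1).choose n : ℝ) *
            (N_B ^ n / (N_B + 1) ^ (n + M)))) :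
    (1 - 2 * ε) ^ 2 * (N_B + 1 - N_B / x) ^ M * (η * N_B * (1 - x) + 1) ^ M
      ≤ ∑' n : ℕ, p n *
          (1 + (x - 1) * (1 - η) / (η * N_B * (1 - x) + 1)) ^ n := by
  have hx : 0 < x := lt_trans (by positivity) hx1
  have hG : 0 < η * N_B * (1 - x) + 1 := by
    have : 0 ≤ 1 - x := by linarith
    positivity
  have hD : 0 < N_B + 1 - N_B / x := by
    have h1 : N_B < x * (N_B + 1) := (div_lt_iff₀ (by positivity)).1 hx1
    have h2 : N_B / x < N_B + 1 := (div_lt_iff₀ hx).2 (by linarith)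
    linarith
  have hT := thermal_aux M hM N_B x hNB hx hx1
  have hA : Summable (fun n => q n * x ^ n) :=
    Summable.of_nonneg_of_le (fun n => mul_nonneg (hq0 n) (by positivity))
      (fun n => mul_le_of_le_one_right (hq0 n) (pow_le_one₀ hx.le hx2)) hq1.summable
  have hA0 : 0 ≤ ∑' n, q n * x ^ n := tsum_nonneg fun n => mul_nonneg (hq0 n) (by positivity)
  have hcs := cs_aux _ _ (fun n => mul_nonneg (hq0 n) (by positivity)) (fun n => by positivity)
    hA hT.summable
  rw [hT.tsum_eq] at hcs
  have heq : ∀ n : ℕ, Real.sqrt (q n * x ^ n) * Real.sqrt ((((n + M - 1).choose n : ℝ) *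
            (N_B ^ n / (N_B + 1) ^ (n + M))) / x ^ n) = Real.sqrt (q n) *
          Real.sqrt (((n + M - 1).choose n : ℝ) * (N_B ^ n / (N_B + 1) ^ (n + M))) := fun n => by
    have hxn : 0 < x ^ n := by positivity
    rw [← Real.sqrt_mul (mul_nonneg (hq0 n) hxn.le), ← Real.sqrt_mul (hq0 n)]
    congr 1
    field_simp
  simp only [heq] at hcs
  have h1 := hcov.trans hcs
  have h2 : (1 - 2 * ε) ^ 2 ≤ (∑' n, q n * x ^ n) * ((N_B + 1 - N_B / x) ^ M)⁻¹ := by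
    have := pow_le_pow_left₀ (by linarith) h1 2
    rwa [mul_pow, Real.sq_sqrt hA0, Real.sq_sqrt (by positivity)] at this
  rw [← div_eq_mul_inv, le_div_iff₀ (by positivity), hrel, inv_mul_eq_div,
    le_div_iff₀ (by positivity)] at h2
  exact h2
end

section
/- Let M be a positive integer, p : (Fin M → ℕ) → ℝ nonnegative with ∑_𝐧 p_𝐧 < ∞, and ξ : Fin M → ℝ with 0 ≤ ξ_m < 1 for all m. Then ∑_{𝐫 ∈ ℕ^M} (∑_{𝐧 ∈ ℕ^M} p_𝐧 ∏_{m=1}^{M} C(n_m + r_m, r_m)) · ∏_{m=1}^{M} ξ_m^{r_m} = (∏_{m=1}^{M} 1/(1-ξ_m)) · ∑_{𝐧 ∈ ℕ^M} p_𝐧 ∏_{m=1}^{M} (1/(1-ξ_m))^{n_m}, where both sides may simultaneously be infinite and C(·,·) denotes the binomial coefficient. -/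
open scoped BigOperators ENNReal

theorem tsum_pi_prod_aux : ∀ (M : ℕ) (f : Fin M → ℕ → ENNReal),
    ∑' r : Fin M → ℕ, ∏ m, f m (r m) = ∏ m, ∑' k, f m k := by
  intro M
  induction M with
  | zero => intro f; simp [tsum_fintype]
  | succ M ih =>
    intro f
    rw [← (Fin.consEquiv (fun _ : Fin (M + 1) => ℕ)).tsum_eq, ENNReal.tsum_prod',
      Fin.prod_univ_succ, ← ih, ← ENNReal.tsum_mul_right]
    refine tsum_congr fun k => ?_
    rw [← ENNReal.tsum_mul_left]
    refine tsum_congr fun r => ?_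
    simp [Fin.consEquiv, Fin.prod_univ_succ]

theorem tsum_choose_aux (n : ℕ) (x : ℝ) (h0 : 0 ≤ x) (h1 : x < 1) :
    ∑' r : ℕ, ((n + r).choose r : ENNReal) * ENNReal.ofReal x ^ r
      = ENNReal.ofReal (1 / (1 - x)) * ENNReal.ofReal (1 / (1 - x)) ^ n := by
  have hx : ‖x‖ < 1 := by rwa [Real.norm_of_nonneg h0]
  have h := hasSum_choose_mul_geometric_of_norm_lt_one n hx
  have hpos : 0 ≤ 1 / (1 - x) := by
    have : 0 < 1 - x := by linarith
    positivity
  rw [← pow_succ', ← ENNReal.ofReal_pow hpos, one_div_pow, ← h.tsum_eq,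
    ENNReal.ofReal_tsum_of_nonneg (fun k => by positivity) h.summable]
  refine tsum_congr fun r => ?_
  rw [ENNReal.ofReal_mul (by positivity), ENNReal.ofReal_pow h0, ENNReal.ofReal_natCast,
    add_comm n r, Nat.choose_symm_add]

/-- Multimode relation (Eq. (84) of the paper) between the rising-factorial
moment generating function and the probability generating function:
`𝓡(ξ) = ∏ (1-ξ_m)⁻¹ · 𝓟(1/(1-ξ₁), …, 1/(1-ξ_M))`. Sums are taken in `ℝ≥0∞`
since both sides may simultaneously be infinite. -/
theorem stmt14 (M : ℕ) (hM : 0 < M) (p : (Fin M → ℕ) → ℝ)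
    (hp0 : ∀ v, 0 ≤ p v) (hp : Summable p)
    (ξ : Fin M → ℝ) (hξ0 : ∀ m, 0 ≤ ξ m) (hξ1 : ∀ m, ξ m < 1) :
    ∑' r : Fin M → ℕ,
        (∑' v : Fin M → ℕ,
            ENNReal.ofReal (p v) * ∏ m, ((v m + r m).choose (r m) : ℝ≥0∞)) *
          ∏ m, ENNReal.ofReal (ξ m) ^ (r m)
      = (∏ m, ENNReal.ofReal (1 / (1 - ξ m))) *
          ∑' v : Fin M → ℕ,
            ENNReal.ofReal (p v) * ∏ m, ENNReal.ofReal (1 / (1 - ξ m)) ^ (v m) := by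
  simp_rw [← ENNReal.tsum_mul_right]
  rw [ENNReal.tsum_comm, ← ENNReal.tsum_mul_left]
  refine tsum_congr fun v => ?_
  simp_rw [mul_assoc, ← Finset.prod_mul_distrib]
  rw [ENNReal.tsum_mul_left,
    tsum_pi_prod_aux M (fun m k => ((v m + k).choose k : ENNReal) * ENNReal.ofReal (ξ m) ^ k),
    mul_left_comm, ← Finset.prod_mul_distrib]
  congr 1
  exact Finset.prod_congr rfl fun m _ => tsum_choose_aux (v m) (ξ m) (hξ0 m) (hξ1 m)
end
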